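/- arXiv:2310.11013 — 5 statements merged into one kernel-verified Lean document; each statement's English description precedes it below -/
import Mathlib

section
/- Let M be a positive integer, let p : (Fin M → ℕ) → ℝ be nonnegative with ∑_{𝐤} p_𝐤 < ∞, and let a, b ≥ 0 be real numbers with a + b ≤ 1. Then ∑_{𝐥 ∈ ℕ^M} ∑_{𝐧 ∈ ℕ^M} p_{𝐧+𝐥} · a^{|𝐥|} · b^{|𝐧|} · ∏_{m=1}^{M} C(n_m + l_m, l_m) = ∑_{𝐤 ∈ ℕ^M} p_𝐤 · (a+b)^{|𝐤|}, where |𝐧| := n_1 + ⋯ + n_M and C(·,·) denotes the binomial coefficient. -/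
open scoped BigOperators

/-!
Every pair `(l, n)` of multi-indices lies over exactly one `k = l + n`, so a summable double series
may be summed first along the finite fibres `l + n = k`. Along such a fibre the weights add up to
`∏ i, (a i + b i) ^ k i`: this is the binomial theorem in each coordinate, multiplied out.
The same fibrewise computation with `‖p k‖`, `‖a i‖`, `‖b i‖` in place of `p k`, `a i`, `b i` gives
the absolute summability that the rearrangement needs.
-/

open Finset

section Antidiagonal

variable {A : Type*} [AddMonoid A] [HasAntidiagonal A]

lemma summable_iff_summable_sum_antidiagonal_of_nonneg {f : A × A → ℝ} (hf : ∀ x, 0 ≤ f x) :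
    Summable f ↔ Summable fun k ↦ ∑ x ∈ antidiagonal k, f x := by
  have tsum_fibre (k : A) :
      ∑' x : antidiagonal k, f x = ∑ x ∈ antidiagonal k, f x :=
    Finset.tsum_subtype (antidiagonal k) f
  rw [← HasAntidiagonal.sigmaAntidiagonalEquivProd.summable_iff]
  refine (summable_sigma_of_nonneg fun _ ↦ hf _).trans ?_
  rw [and_iff_right fun _ ↦ (hasSum_fintype _).summable]
  exact summable_congr tsum_fibre

lemma tsum_tsum_eq_tsum_sum_antidiagonal {E : Type*} [AddCommGroup E] [UniformSpace E]
    [IsUniformAddGroup E] [CompleteSpace E] [T2Space E] {f : A × A → E} (hf : Summable f) :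
    ∑' l, ∑' n, f (l, n) = ∑' k, ∑ x ∈ antidiagonal k, f x := by
  have hσ := HasAntidiagonal.sigmaAntidiagonalEquivProd.summable_iff.2 hf
  rw [← hf.tsum_prod, ← HasAntidiagonal.sigmaAntidiagonalEquivProd.tsum_eq f]
  exact hσ.tsum_sigma.trans (tsum_congr fun k ↦ Finset.tsum_subtype (antidiagonal k) f)

end Antidiagonal

section Pi

variable {ι : Type*} [Fintype ι] [DecidableEq ι]

/-- Antidiagonals in a finite product of additive monoids, formed coordinatewise: a choice of a pair
in each coordinate is repackaged as a pair of families. -/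
instance piHasAntidiagonal {A : ι → Type*} [∀ i, AddMonoid (A i)] [∀ i, HasAntidiagonal (A i)] :
    HasAntidiagonal (∀ i, A i) where
  antidiagonal k :=
    (Fintype.piFinset fun i ↦ antidiagonal (k i)).map
      (Equiv.arrowProdEquivProdArrow ι A A).toEmbedding
  mem_antidiagonal := by simp [mem_map_equiv, funext_iff]

lemma prod_sum_antidiagonal {A : ι → Type*} [∀ i, AddMonoid (A i)] [∀ i, HasAntidiagonal (A i)]
    {R : Type*} [CommSemiring R] (f : ∀ i, A i × A i → R) (k : ∀ i, A i) :
    ∏ i, ∑ x ∈ antidiagonal (k i), f i x = ∑ x ∈ antidiagonal k, ∏ i, f i (x.1 i, x.2 i) := by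
  rw [prod_univ_sum]
  exact sum_equiv (Equiv.arrowProdEquivProdArrow ι A A) (by simp [funext_iff]) fun _ _ ↦ rfl

lemma prod_add_pow_eq_sum_antidiagonal {R : Type*} [CommSemiring R] (a b : ι → R) (k : ι → ℕ) :
    ∏ i, (a i + b i) ^ k i =
      ∑ x ∈ antidiagonal k, ∏ i, (k i).choose (x.1 i) • (a i ^ x.1 i * b i ^ x.2 i) := by
  simp_rw [fun i ↦ (Commute.all (a i) (b i)).add_pow' (k i)]
  exact prod_sum_antidiagonal (fun i x ↦ (k i).choose x.1 • (a i ^ x.1 * b i ^ x.2)) k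

end Pi

section Loss

variable {ι : Type*} [Fintype ι] {R : Type*}

/-- The contribution of the loss pattern `x.1` and the residual photon numbers `x.2`, where mode `i`
carries the weight `a i` per lost photon and `b i` per surviving photon. -/
def lossTerm [CommSemiring R] (p : (ι → ℕ) → R) (a b : ι → R) (x : (ι → ℕ) × (ι → ℕ)) : R :=
  p (x.2 + x.1) * (∏ i, a i ^ x.1 i) * (∏ i, b i ^ x.2 i) *
    ∏ i, ((x.2 i + x.1 i).choose (x.1 i) : R)

lemma sum_antidiagonal_lossTerm [DecidableEq ι] [CommSemiring R] (p : (ι → ℕ) → R) (a b : ι → R)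
    (k : ι → ℕ) :
    ∑ x ∈ antidiagonal k, lossTerm p a b x = p k * ∏ i, (a i + b i) ^ k i := by
  rw [prod_add_pow_eq_sum_antidiagonal, mul_sum]
  refine sum_congr rfl fun x hx ↦ ?_
  obtain rfl : x.2 + x.1 = k := (add_comm _ _).trans (mem_antidiagonal.1 hx)
  simp only [lossTerm, nsmul_eq_mul, prod_mul_distrib, Pi.add_apply]
  ring

lemma norm_lossTerm_le [NormedCommRing R] [NormOneClass R] (p : (ι → ℕ) → R) (a b : ι → R)
    (x : (ι → ℕ) × (ι → ℕ)) :
    ‖lossTerm p a b x‖ ≤ lossTerm (‖p ·‖) (‖a ·‖) (‖b ·‖) x := by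
  have norm_prod_pow_le (c : ι → R) (n : ι → ℕ) : ‖∏ i, c i ^ n i‖ ≤ ∏ i, ‖c i‖ ^ n i :=
    (Finset.norm_prod_le _ _).trans (by gcongr; exact norm_pow_le _ _)
  have norm_prod_natCast_le (n : ι → ℕ) : ‖∏ i, (n i : R)‖ ≤ ∏ i, (n i : ℝ) :=
    (Finset.norm_prod_le _ _).trans (by gcongr; simpa using Nat.norm_cast_le (α := R) _)
  refine norm_mul_le_of_le (norm_mul_le_of_le (norm_mul_le_of_le le_rfl ?_) ?_) ?_
  exacts [norm_prod_pow_le _ _, norm_prod_pow_le _ _, norm_prod_natCast_le _]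

lemma summable_lossTerm [NormedCommRing R] [NormOneClass R] [CompleteSpace R]
    {p : (ι → ℕ) → R} {a b : ι → R} (h : Summable fun k ↦ ‖p k‖ * ∏ i, (‖a i‖ + ‖b i‖) ^ k i) :
    Summable (lossTerm p a b) := by
  classical
  have lossTerm_norm_nonneg (x : (ι → ℕ) × (ι → ℕ)) :
      0 ≤ lossTerm (‖p ·‖) (‖a ·‖) (‖b ·‖) x :=
    (norm_nonneg _).trans (norm_lossTerm_le p a b x)
  refine .of_norm_bounded ?_ (norm_lossTerm_le p a b)
  rw [summable_iff_summable_sum_antidiagonal_of_nonneg lossTerm_norm_nonneg]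
  simpa only [sum_antidiagonal_lossTerm] using h

lemma summable_norm_mul_prod_pow {E : Type*} [SeminormedAddCommGroup E] {p : (ι → ℕ) → E}
    (hp : Summable fun k ↦ ‖p k‖) {c : ι → ℝ} (hc₀ : ∀ i, 0 ≤ c i) (hc₁ : ∀ i, c i ≤ 1) :
    Summable fun k ↦ ‖p k‖ * ∏ i, c i ^ k i := by
  have hnonneg (k : ι → ℕ) : 0 ≤ ∏ i, c i ^ k i :=
    prod_nonneg fun i _ ↦ pow_nonneg (hc₀ i) _
  have hle_one (k : ι → ℕ) : ∏ i, c i ^ k i ≤ 1 :=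
    prod_le_one (fun i _ ↦ pow_nonneg (hc₀ i) _) fun i _ ↦ pow_le_one₀ (hc₀ i) (hc₁ i)
  exact hp.of_nonneg_of_le (fun k ↦ mul_nonneg (norm_nonneg _) (hnonneg k))
    fun k ↦ mul_le_of_le_one_right (norm_nonneg _) (hle_one k)

theorem stmt0_general [NormedCommRing R] [NormOneClass R] [CompleteSpace R] (p : (ι → ℕ) → R)
    (a b : ι → R) (h : Summable fun k ↦ ‖p k‖ * ∏ i, (‖a i‖ + ‖b i‖) ^ k i) :
    ∑' l : ι → ℕ, ∑' n : ι → ℕ, p (n + l) * (∏ i, a i ^ l i) * (∏ i, b i ^ n i) *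
        ∏ i, ((n i + l i).choose (l i) : R)
      = ∑' k : ι → ℕ, p k * ∏ i, (a i + b i) ^ k i := by
  classical
  have hs : Summable (lossTerm p a b) := summable_lossTerm h
  exact (tsum_tsum_eq_tsum_sum_antidiagonal hs).trans
    (tsum_congr fun k ↦ sum_antidiagonal_lossTerm p a b k)

end Loss

/-- Summation-reindexing identity (Theorem 1 of the paper): the double sum over
loss patterns `l` and residual photon numbers `n` collapses, via `k = n + l` and
the binomial theorem applied coordinatewise, to a single sum. -/
theorem stmt0 (M : ℕ) (hM : 0 < M) (p : (Fin M → ℕ) → ℝ)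
    (hp : ∀ k, 0 ≤ p k) (hsum : Summable p)
    (a b : ℝ) (ha : 0 ≤ a) (hb : 0 ≤ b) (hab : a + b ≤ 1) :
    ∑' l : Fin M → ℕ, ∑' n : Fin M → ℕ,
      p (n + l) * a ^ (∑ m, l m) * b ^ (∑ m, n m) *
        ∏ m, ((n m + l m).choose (l m) : ℝ)
      = ∑' k : Fin M → ℕ, p k * (a + b) ^ (∑ m, k m) := by
  have h := summable_norm_mul_prod_pow hsum.norm (c := fun _ ↦ ‖a‖ + ‖b‖)
    (fun _ ↦ by positivity) fun _ ↦ by rwa [Real.norm_of_nonneg ha, Real.norm_of_nonneg hb]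
  simpa only [prod_pow_eq_pow_sum] using stmt0_general p (fun _ ↦ a) (fun _ ↦ b) h
end

section
/- Let M be a positive integer and N_B ≥ 0. Let p : (Fin M → ℕ) → ℝ be the product thermal pmf p_𝐧 = ∏_{m=1}^{M} N_B^{n_m}/(N_B+1)^{n_m+1}, and let q : (Fin M → ℕ) → ℝ be any nonnegative function. Setting q_n := ∑_{𝐧 : n_1+⋯+n_M = n} q_𝐧, one has ∑_{𝐧 ∈ ℕ^M} √(p_𝐧 · q_𝐧) ≤ ∑_{n=0}^{∞} √(q_n) · √(C(n+M-1, n) · N_B^n/(N_B+1)^{n+M}). -/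
open scoped BigOperators ENNReal

/-!
Split the sum over `v` according to the total `n = ∑ m, v m`. Cauchy–Schwarz on each of the finite
fibres bounds the Bhattacharyya coefficient of two weights by that of their push-forwards under the
total. The thermal weight of `v` is `N_B ^ n / (N_B + 1) ^ (n + M)`, which depends only on `n`, so
its push-forward is this number times the number of weak compositions of `n` into `M` parts.
-/

section CoarseGraining

variable {α β : Type*} {f : α → β} {fiber : β → Finset α}

theorem tsum_eq_tsum_sum_fiber (hfiber : ∀ a b, a ∈ fiber b ↔ f a = b) (g : α → ℝ≥0∞) :
    ∑' a, g a = ∑' b, ∑ a ∈ fiber b, g a := by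
  rw [← ENNReal.tsum_fiberwise g f]
  refine tsum_congr fun b => ?_
  have hpreimage : f ⁻¹' {b} = (fiber b : Set α) := by
    ext a
    simp [hfiber]
  rw [hpreimage]
  exact Finset.tsum_subtype (fiber b) g

theorem sum_sqrt_mul_le_sqrt_sum_mul_sqrt_sum {p q : α → ℝ} (hp : ∀ a, 0 ≤ p a)
    (hq : ∀ a, 0 ≤ q a) (s : Finset α) :
    ∑ a ∈ s, √(p a * q a) ≤ √(∑ a ∈ s, p a) * √(∑ a ∈ s, q a) := by
  simpa only [Real.sqrt_mul (hp _)] using Real.sum_sqrt_mul_sqrt_le s hp hq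

theorem tsum_sqrt_mul_le_tsum_sqrt_sum_fiber_mul_sqrt_sum_fiber {p q : α → ℝ} (hp : ∀ a, 0 ≤ p a)
    (hq : ∀ a, 0 ≤ q a) (hfiber : ∀ a b, a ∈ fiber b ↔ f a = b) :
    ∑' a, ENNReal.ofReal √(p a * q a)
      ≤ ∑' b, ENNReal.ofReal (√(∑ a ∈ fiber b, p a) * √(∑ a ∈ fiber b, q a)) := by
  rw [tsum_eq_tsum_sum_fiber hfiber]
  refine ENNReal.tsum_le_tsum fun b => ?_
  rw [← ENNReal.ofReal_sum_of_nonneg fun _ _ => Real.sqrt_nonneg _]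
  exact ENNReal.ofReal_le_ofReal (sum_sqrt_mul_le_sqrt_sum_mul_sqrt_sum hp hq (fiber b))

end CoarseGraining

section ThermalWeights

variable {ι : Type*}

theorem card_piAntidiag_nat_eq_choose [DecidableEq ι] (s : Finset ι) (n : ℕ) :
    (s.piAntidiag n).card = (n + s.card - 1).choose n := by
  rw [add_comm n, ← Finset.card_finsuppAntidiag_nat_eq_choose]
  simp [Finset.finsuppAntidiag]

theorem prod_pow_div_pow_succ {G : Type*} [DivisionCommMonoid G] (s : Finset ι) (x y : G)
    (v : ι → ℕ) :
    ∏ i ∈ s, x ^ v i / y ^ (v i + 1) = x ^ (∑ i ∈ s, v i) / y ^ (∑ i ∈ s, v i + s.card) := by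
  rw [Finset.prod_div_distrib, Finset.prod_pow_eq_pow_sum, Finset.prod_pow_eq_pow_sum,
    Finset.sum_add_distrib, Finset.card_eq_sum_ones]

theorem sum_piAntidiag_prod_pow_div_pow_succ [DecidableEq ι] {K : Type*} [Semifield K]
    (s : Finset ι) (x y : K) (n : ℕ) :
    ∑ v ∈ s.piAntidiag n, ∏ i ∈ s, x ^ v i / y ^ (v i + 1)
      = ((n + s.card - 1).choose n : K) * (x ^ n / y ^ (n + s.card)) := by
  have hconst : ∀ v ∈ s.piAntidiag n,
      ∏ i ∈ s, x ^ v i / y ^ (v i + 1) = x ^ n / y ^ (n + s.card) := fun v hv => by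
    rw [prod_pow_div_pow_succ, (Finset.mem_piAntidiag.mp hv).1]
  rw [Finset.sum_congr rfl hconst, Finset.sum_const, card_piAntidiag_nat_eq_choose, nsmul_eq_mul]

end ThermalWeights

/-- The Bhattacharyya coefficient between the `M`-mode thermal photon-number
distribution and an arbitrary photon-number distribution is bounded by an
expression depending only on the total photon-number distribution
(Eq. (11) of the paper); sums are taken in `ℝ≥0∞` as they may be infinite. -/
theorem stmt3 (M : ℕ) (hM : 0 < M) (N_B : ℝ) (hNB : 0 ≤ N_B)
    (q : (Fin M → ℕ) → ℝ) (hq : ∀ v, 0 ≤ q v) :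
    ∑' v : Fin M → ℕ,
        ENNReal.ofReal
          (Real.sqrt ((∏ m, N_B ^ (v m) / (N_B + 1) ^ (v m + 1)) * q v))
      ≤ ∑' n : ℕ,
          ENNReal.ofReal
            (Real.sqrt (∑ v ∈ Finset.Nat.antidiagonalTuple M n, q v) *
              Real.sqrt (((n + M - 1).choose n : ℝ) *
                (N_B ^ n / (N_B + 1) ^ (n + M)))) := by
  have hp : ∀ v : Fin M → ℕ, 0 ≤ ∏ m, N_B ^ v m / (N_B + 1) ^ (v m + 1) := fun v => by positivity
  have hp_total : ∀ n, ∑ v ∈ Finset.Nat.antidiagonalTuple M n,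
      ∏ m, N_B ^ v m / (N_B + 1) ^ (v m + 1)
        = ((n + M - 1).choose n : ℝ) * (N_B ^ n / (N_B + 1) ^ (n + M)) := fun n => by
    rw [← Finset.piAntidiag_univ_fin_eq_antidiagonalTuple, sum_piAntidiag_prod_pow_div_pow_succ,
      Finset.card_fin]
  simpa only [hp_total, mul_comm (q _)] using
    tsum_sqrt_mul_le_tsum_sqrt_sum_fiber_mul_sqrt_sum_fiber hq hp
      fun _ _ => Finset.Nat.mem_antidiagonalTuple
end

section
/- Let M be a positive integer, N_B > 0, ε ∈ [0, 1/2], and let x satisfy N_B/(N_B+1) < x ≤ 1. Let (q_n)_{n∈ℕ} be a probability mass function on ℕ such that ∑_{n=0}^{∞} √(q_n) · √(C(n+M-1, n) · N_B^n/(N_B+1)^{n+M}) ≥ 1 - 2ε. Then ∑_{n=0}^{∞} q_n x^n ≥ (1-2ε)^2 · (N_B + 1 - N_B/x)^M. -/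
open scoped BigOperators

/-!
The overlap `∑ √(q n) √(p n)` does not change when `q n` is multiplied by `x ^ n` and `p n` is
divided by it. Cauchy–Schwarz then bounds its square by the generating function of `q` at `x` times
that of `p` at `1 / x`. For the thermal law `p`, the latter is a negative binomial series, which
converges for `x > N_B / (N_B + 1)` and has the sum `((N_B + 1 - N_B / x) ^ M)⁻¹`.
-/

open Real

/-- The photon-number distribution of `M` thermal modes of mean photon number `N` each, that is, the
negative binomial distribution: the law of the background that Willie compares with `q`. For `M = 0`
it is the vacuum: truncated subtraction gives `(0 - 1).choose 0 = 1`, and all other terms vanish. -/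
noncomputable def thermalWeight (M : ℕ) (N : ℝ) (n : ℕ) : ℝ :=
  ((n + M - 1).choose n : ℝ) * (N ^ n / (N + 1) ^ (n + M))

section CauchySchwarz

variable {ι : Type*} {f g w : ι → ℝ}

theorem tsum_sqrt_mul_sqrt_le (hf₀ : ∀ i, 0 ≤ f i) (hg₀ : ∀ i, 0 ≤ g i)
    (hf : Summable f) (hg : Summable g) :
    ∑' i, √(f i) * √(g i) ≤ √(∑' i, f i) * √(∑' i, g i) := by
  have sqrt_rpow_two {h : ι → ℝ} (hh : ∀ i, 0 ≤ h i) (i : ι) : √(h i) ^ (2 : ℝ) = h i := by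
    rw [rpow_two, sq_sqrt (hh i)]
  simpa only [sqrt_rpow_two hf₀, sqrt_rpow_two hg₀, ← sqrt_eq_rpow] using
    inner_le_Lp_mul_Lq_tsum_of_nonneg HolderConjugate.two_two
      (fun i => sqrt_nonneg (f i)) (fun i => sqrt_nonneg (g i))
      (by simpa only [sqrt_rpow_two hf₀] using hf) (by simpa only [sqrt_rpow_two hg₀] using hg)

theorem tsum_sqrt_mul_sqrt_le_of_weight (hf₀ : ∀ i, 0 ≤ f i) (hg₀ : ∀ i, 0 ≤ g i)
    (hw : ∀ i, 0 < w i) (hf : Summable fun i => f i * w i) (hg : Summable fun i => g i * (w i)⁻¹) :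
    ∑' i, √(f i) * √(g i) ≤ √(∑' i, f i * w i) * √(∑' i, g i * (w i)⁻¹) := by
  have weights_cancel (i : ι) :
      √(f i * w i) * √(g i * (w i)⁻¹) = √(f i) * √(g i) := by
    rw [sqrt_mul (hf₀ i), sqrt_mul (hg₀ i), sqrt_inv, mul_mul_mul_comm,
      mul_inv_cancel₀ (sqrt_pos.2 (hw i)).ne', mul_one]
  simpa only [weights_cancel] using tsum_sqrt_mul_sqrt_le
    (fun i => mul_nonneg (hf₀ i) (hw i).le) (fun i => mul_nonneg (hg₀ i) (inv_pos.2 (hw i)).le)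
    hf hg

end CauchySchwarz

theorem hasSum_multichoose_mul_geometric_of_norm_lt_one {𝕜 : Type*} [NormedDivisionRing 𝕜]
    [HasSummableGeomSeries 𝕜] (M : ℕ) {r : 𝕜} (hr : ‖r‖ < 1) :
    HasSum (fun n => (M.multichoose n : 𝕜) * r ^ n) ((1 - r) ^ M)⁻¹ := by
  cases M with
  | zero =>
    convert hasSum_single (f := fun n => (Nat.multichoose 0 n : 𝕜) * r ^ n) 0 ?_ using 1
    · simp
    · rintro (_ | n) hn
      · contradiction
      · simp
  | succ k =>
    have multichoose_eq_choose (n : ℕ) : (k + 1).multichoose n = (n + k).choose k := by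
      rw [Nat.multichoose_eq, show k + 1 + n - 1 = n + k by omega, Nat.choose_symm_add]
    simpa only [multichoose_eq_choose, one_div] using
      hasSum_choose_mul_geometric_of_norm_lt_one k hr

theorem thermalWeight_nonneg (M : ℕ) {N : ℝ} (hN : 0 ≤ N) (n : ℕ) : 0 ≤ thermalWeight M N n := by
  unfold thermalWeight
  positivity

theorem thermalWeight_eq_multichoose (M : ℕ) (N : ℝ) (n : ℕ) :
    thermalWeight M N n = ((N + 1) ^ M)⁻¹ * (M.multichoose n * (N / (N + 1)) ^ n) := by
  rw [thermalWeight, Nat.multichoose_eq, add_comm M n, div_pow, pow_add]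
  ring

theorem hasSum_thermalWeight_mul_pow (M : ℕ) {N z : ℝ} (hz : |N * z| < |N + 1|) :
    HasSum (fun n => thermalWeight M N n * z ^ n) ((N + 1 - N * z) ^ M)⁻¹ := by
  have hN : N + 1 ≠ 0 := abs_pos.1 ((abs_nonneg _).trans_lt hz)
  have ratio_lt_one : ‖N / (N + 1) * z‖ < 1 := by
    rwa [norm_eq_abs, div_mul_eq_mul_div, abs_div, div_lt_one (abs_pos.2 hN)]
  have factor : N + 1 - N * z = (N + 1) * (1 - N / (N + 1) * z) := by
    field_simp
  rw [factor, mul_pow, mul_inv]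
  refine ((hasSum_multichoose_mul_geometric_of_norm_lt_one M ratio_lt_one).mul_left
    ((N + 1) ^ M)⁻¹).congr_fun fun n => ?_
  rw [thermalWeight_eq_multichoose, mul_pow]
  ring

theorem summable_mul_pow_of_le_one {q : ℕ → ℝ} {x : ℝ} (hq₀ : ∀ n, 0 ≤ q n) (hq : Summable q)
    (hx₀ : 0 ≤ x) (hx₁ : x ≤ 1) : Summable fun n => q n * x ^ n :=
  hq.of_nonneg_of_le (fun n => mul_nonneg (hq₀ n) (pow_nonneg hx₀ n))
    fun n => mul_le_of_le_one_right (hq₀ n) (pow_le_one₀ hx₀ hx₁)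

theorem stmt6_general (M : ℕ) {N_B x c : ℝ} (hNB : 0 ≤ N_B) (hx : N_B / (N_B + 1) < x)
    (hc : 0 ≤ c) {q : ℕ → ℝ} (hq₀ : ∀ n, 0 ≤ q n) (hq : Summable fun n => q n * x ^ n)
    (hcov : c ≤ ∑' n, √(q n) * √(thermalWeight M N_B n)) :
    c ^ 2 * (N_B + 1 - N_B / x) ^ M ≤ ∑' n, q n * x ^ n := by
  have hx₀ : 0 < x := (by positivity : 0 ≤ N_B / (N_B + 1)).trans_lt hx
  have tilt_lt : N_B * x⁻¹ < N_B + 1 := by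
    rwa [← div_eq_mul_inv, div_lt_comm₀ hx₀ (by positivity)]
  have tilted : HasSum (fun n => thermalWeight M N_B n * (x ^ n)⁻¹)
      ((N_B + 1 - N_B / x) ^ M)⁻¹ := by
    simpa only [inv_pow, div_eq_mul_inv] using hasSum_thermalWeight_mul_pow M
      (z := x⁻¹) (by rwa [abs_of_nonneg (by positivity), abs_of_nonneg (by positivity)])
  have hpos : 0 < (N_B + 1 - N_B / x) ^ M := pow_pos (sub_pos.2 tilt_lt) M
  have hpgf : 0 ≤ ∑' n, q n * x ^ n :=
    tsum_nonneg fun n => mul_nonneg (hq₀ n) (pow_nonneg hx₀.le n)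
  have cauchy_schwarz : c ≤ √(∑' n, q n * x ^ n) * √((N_B + 1 - N_B / x) ^ M)⁻¹ :=
    tilted.tsum_eq ▸ hcov.trans (tsum_sqrt_mul_sqrt_le_of_weight hq₀ (thermalWeight_nonneg M hNB)
      (pow_pos hx₀) hq tilted.summable)
  rwa [← sqrt_mul hpgf, ← div_eq_mul_inv, le_sqrt hc (div_nonneg hpgf hpos.le),
    le_div_iff₀ hpos] at cauchy_schwarz

/-- From the ε-covertness condition on the total photon-number pmf `q`, the
probability generating function of `q` at `x` is bounded below; proved by
Cauchy–Schwarz after splitting `x^(-n/2) x^(n/2)` and evaluating the tilted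
negative binomial sum. -/
theorem stmt6 (M : ℕ) (hM : 0 < M) (N_B : ℝ) (hNB : 0 < N_B)
    (ε : ℝ) (hε0 : 0 ≤ ε) (hε1 : ε ≤ 1 / 2)
    (x : ℝ) (hx1 : N_B / (N_B + 1) < x) (hx2 : x ≤ 1)
    (q : ℕ → ℝ) (hq0 : ∀ n, 0 ≤ q n) (hq1 : HasSum q 1)
    (hcov : 1 - 2 * ε ≤
        ∑' n : ℕ, Real.sqrt (q n) *
          Real.sqrt (((n + M - 1).choose n : ℝ) *
            (N_B ^ n / (N_B + 1) ^ (n + M)))) :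
    (1 - 2 * ε) ^ 2 * (N_B + 1 - N_B / x) ^ M ≤ ∑' n : ℕ, q n * x ^ n := by
  have hx0 : 0 ≤ x := (div_pos hNB (by linarith)).le.trans hx1.le
  exact stmt6_general M hNB.le hx1 (by linarith) hq0
    (summable_mul_pow_of_le_one hq0 hq1.summable hx0 hx2) hcov
end

section
/- Let M be a positive integer, 0 < η < 1, N_B > 0, ε ∈ [0,1/2], and let x satisfy N_B/(N_B+1) < x ≤ 1. Let (q_n) and (p_n) be probability mass functions on ℕ whose generating functions P_W(ξ) = ∑ q_n ξ^n and P_S(ξ) = ∑ p_n ξ^n satisfy, at ξ = x, the relation P_W(x) = (ηN_B(1-x)+1)^{-M} · P_S(1 + (x-1)(1-η)/(ηN_B(1-x)+1)). If ∑_{n=0}^{∞} √(q_n) · √(C(n+M-1,n) N_B^n/(N_B+1)^{n+M}) ≥ 1-2ε, then P_S(1 + (x-1)(1-η)/(ηN_B(1-x)+1)) ≥ (1-2ε)^2 · (N_B+1-N_B/x)^M · (ηN_B(1-x)+1)^M. -/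
open scoped BigOperators

/-!
Insert the weights `x ^ n` into the fidelity `∑ √(q n) √(t n)` between `q` and the thermal
distribution `t`: by Cauchy–Schwarz its square is at most `P_W(x) * P_t(1 / x)`, where `P_t` is the
generating function of `t`. The negative binomial series gives
`P_t(1 / x) = (N_B + 1 - N_B / x) ^ (-M)` and converges because `N_B / (N_B + 1) < x`. Covertness
bounds the fidelity from below, hence also `P_W(x)`, and the transformation law turns this into the
bound on `P_S`.
-/

section CauchySchwarz

variable {ι : Type*} {f g w : ι → ℝ}

lemma sq_tsum_sqrt_mul_sqrt_le (hf : ∀ i, 0 ≤ f i) (hg : ∀ i, 0 ≤ g i)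
    (hfs : Summable f) (hgs : Summable g) :
    (∑' i, √(f i) * √(g i)) ^ 2 ≤ (∑' i, f i) * ∑' i, g i := by
  have holder := Real.inner_le_Lp_mul_Lq_tsum_of_nonneg (p := 2) (q := 2)
    (f := fun i ↦ √(f i)) (g := fun i ↦ √(g i)) .two_two
    (fun _ ↦ Real.sqrt_nonneg _) (fun _ ↦ Real.sqrt_nonneg _)
    (by simpa only [Real.rpow_two, Real.sq_sqrt, hf] using hfs)
    (by simpa only [Real.rpow_two, Real.sq_sqrt, hg] using hgs)
  simp only [Real.rpow_two, Real.sq_sqrt, hf, hg, ← Real.sqrt_eq_rpow] at holder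
  have overlap_nonneg : 0 ≤ ∑' i, √(f i) * √(g i) := tsum_nonneg fun _ ↦ by positivity
  have := pow_le_pow_left₀ overlap_nonneg holder 2
  rwa [mul_pow, Real.sq_sqrt (tsum_nonneg hf), Real.sq_sqrt (tsum_nonneg hg)] at this

lemma sq_tsum_sqrt_mul_sqrt_le_weighted (hf : ∀ i, 0 ≤ f i) (hg : ∀ i, 0 ≤ g i)
    (hw : ∀ i, 0 < w i) (hfw : Summable fun i ↦ f i * w i)
    (hgw : Summable fun i ↦ g i * (w i)⁻¹) :
    (∑' i, √(f i) * √(g i)) ^ 2 ≤ (∑' i, f i * w i) * ∑' i, g i * (w i)⁻¹ := by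
  have weights_cancel (i : ι) : √(f i * w i) * √(g i * (w i)⁻¹) = √(f i) * √(g i) := by
    rw [Real.sqrt_mul (hf i), Real.sqrt_mul (hg i), mul_mul_mul_comm,
      ← Real.sqrt_mul (hw i).le, mul_inv_cancel₀ (hw i).ne', Real.sqrt_one, mul_one]
  simpa only [weights_cancel] using
    sq_tsum_sqrt_mul_sqrt_le (fun i ↦ mul_nonneg (hf i) (hw i).le)
      (fun i ↦ mul_nonneg (hg i) (inv_nonneg.2 (hw i).le)) hfw hgw

end CauchySchwarz

lemma summable_mul_pow_of_abs_le_one {a : ℕ → ℝ} {x : ℝ} (ha : Summable a) (hx : |x| ≤ 1) :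
    Summable fun n ↦ a n * x ^ n := by
  refine .of_norm_bounded ha.abs fun n ↦ ?_
  rw [norm_mul, norm_pow, Real.norm_eq_abs, Real.norm_eq_abs]
  exact mul_le_of_le_one_right (abs_nonneg _) (pow_le_one₀ (abs_nonneg x) hx)

/-- The distribution of the total photon number of `M` independent thermal modes, each with mean
photon number `N`, i.e. the negative binomial distribution. It is given by its real weights, and
`n + M - 1` is a truncated subtraction, so it is meant for `0 < M`. -/
noncomputable def thermalDist (M : ℕ) (N : ℝ) (n : ℕ) : ℝ :=
  ((n + M - 1).choose n : ℝ) * (N ^ n / (N + 1) ^ (n + M))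

section Thermal

variable {M : ℕ} {N x z : ℝ}

lemma thermalDist_nonneg (hN : 0 ≤ N) (n : ℕ) : 0 ≤ thermalDist M N n := by
  unfold thermalDist
  positivity

lemma add_one_sub_div_pos (hN : 0 ≤ N) (hx : N / (N + 1) < x) : 0 < N + 1 - N / x := by
  have hx0 : 0 < x := lt_of_le_of_lt (by positivity) hx
  exact sub_pos.2 ((div_lt_comm₀ (by positivity) hx0).1 hx)

lemma hasSum_thermalDist_mul_pow (hM : 0 < M) (hz : |N * z| < N + 1) :
    HasSum (fun n ↦ thermalDist M N n * z ^ n) ((N + 1 - N * z) ^ M)⁻¹ := by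
  obtain ⟨k, rfl⟩ : ∃ k, M = k + 1 := Nat.exists_eq_add_one.2 hM
  have hN : 0 < N + 1 := (abs_nonneg _).trans_lt hz
  have hr : ‖N * z / (N + 1)‖ < 1 := by
    rwa [norm_div, Real.norm_eq_abs, Real.norm_of_nonneg hN.le, div_lt_one hN]
  have binomial_series :=
    (hasSum_choose_mul_geometric_of_norm_lt_one k hr).mul_left ((N + 1) ^ (k + 1))⁻¹
  convert! binomial_series using 1
  · funext n
    rw [thermalDist, ← Nat.add_assoc, Nat.add_sub_cancel, Nat.choose_symm_add,
      Nat.add_assoc, pow_add, div_pow, mul_pow]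
    field_simp
  · rw [one_div, ← mul_inv, ← mul_pow, mul_sub, mul_one, mul_div_cancel₀ _ hN.ne']

lemma sq_fidelity_thermalDist_mul_le {q : ℕ → ℝ} (hM : 0 < M) (hN : 0 ≤ N)
    (hx : N / (N + 1) < x) (hq : ∀ n, 0 ≤ q n) (hqx : Summable fun n ↦ q n * x ^ n) :
    (∑' n, √(q n) * √(thermalDist M N n)) ^ 2 * (N + 1 - N / x) ^ M ≤ ∑' n, q n * x ^ n := by
  have hx0 : 0 < x := lt_of_le_of_lt (by positivity) hx
  have hD : 0 < N + 1 - N / x := add_one_sub_div_pos hN hx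
  have thermal_pgf : HasSum (fun n ↦ thermalDist M N n * (x ^ n)⁻¹) ((N + 1 - N / x) ^ M)⁻¹ := by
    have hNz : |N * x⁻¹| < N + 1 := by
      rw [← div_eq_mul_inv, abs_of_nonneg (by positivity)]
      exact sub_pos.1 hD
    simpa only [inv_pow, ← div_eq_mul_inv N x] using hasSum_thermalDist_mul_pow hM hNz
  have cauchy_schwarz := sq_tsum_sqrt_mul_sqrt_le_weighted hq (thermalDist_nonneg hN)
    (fun n ↦ pow_pos hx0 n) hqx thermal_pgf.summable
  rwa [thermal_pgf.tsum_eq, ← div_eq_mul_inv, le_div_iff₀ (pow_pos hD M)] at cauchy_schwarz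

end Thermal

theorem stmt7_general {M : ℕ} {η N_B ε x : ℝ} {q : ℕ → ℝ} {P_S : ℝ → ℝ} (hM : 0 < M)
    (hN : 0 ≤ N_B) (hG : 0 < η * N_B * (1 - x) + 1) (hε : ε ≤ 1 / 2)
    (hx : N_B / (N_B + 1) < x) (hq : ∀ n, 0 ≤ q n) (hqx : Summable fun n ↦ q n * x ^ n)
    (hrel : ∑' n : ℕ, q n * x ^ n
      = ((η * N_B * (1 - x) + 1) ^ M)⁻¹ *
          P_S (1 + (x - 1) * (1 - η) / (η * N_B * (1 - x) + 1)))
    (hcov : 1 - 2 * ε ≤ ∑' n, √(q n) * √(thermalDist M N_B n)) :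
    (1 - 2 * ε) ^ 2 * (N_B + 1 - N_B / x) ^ M * (η * N_B * (1 - x) + 1) ^ M
      ≤ P_S (1 + (x - 1) * (1 - η) / (η * N_B * (1 - x) + 1)) := by
  have hD : 0 < N_B + 1 - N_B / x := add_one_sub_div_pos hN hx
  rw [← le_div_iff₀ (pow_pos hG M), div_eq_inv_mul (P_S _), ← hrel]
  calc (1 - 2 * ε) ^ 2 * (N_B + 1 - N_B / x) ^ M
      ≤ (∑' n, √(q n) * √(thermalDist M N_B n)) ^ 2 * (N_B + 1 - N_B / x) ^ M := by
        have : 0 ≤ 1 - 2 * ε := by linarith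
        gcongr
    _ ≤ ∑' n, q n * x ^ n := sq_fidelity_thermalDist_mul_le hM hN hx hq hqx

/-- Combining the transformation law (Eq. (86) of the paper) between the
probe's total photon-number generating function `P_S` and the generating
function `P_W` of the photon number intercepted by Willie with the
ε-covertness condition yields the key intermediate inequality (Eq. (87)). -/
theorem stmt7 (M : ℕ) (hM : 0 < M) (η N_B ε x : ℝ)
    (hη0 : 0 < η) (hη1 : η < 1) (hNB : 0 < N_B)
    (hε0 : 0 ≤ ε) (hε1 : ε ≤ 1 / 2)
    (hx1 : N_B / (N_B + 1) < x) (hx2 : x ≤ 1)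
    (q p : ℕ → ℝ) (hq0 : ∀ n, 0 ≤ q n) (hq1 : HasSum q 1)
    (hp0 : ∀ n, 0 ≤ p n) (hp1 : HasSum p 1)
    (hrel : ∑' n : ℕ, q n * x ^ n
        = ((η * N_B * (1 - x) + 1) ^ M)⁻¹ *
            ∑' n : ℕ, p n *
              (1 + (x - 1) * (1 - η) / (η * N_B * (1 - x) + 1)) ^ n)
    (hcov : 1 - 2 * ε ≤
        ∑' n : ℕ, Real.sqrt (q n) *
          Real.sqrt (((n + M - 1).choose n : ℝ) *
            (N_B ^ n / (N_B + 1) ^ (n + M)))) :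
    (1 - 2 * ε) ^ 2 * (N_B + 1 - N_B / x) ^ M * (η * N_B * (1 - x) + 1) ^ M
      ≤ ∑' n : ℕ, p n *
          (1 + (x - 1) * (1 - η) / (η * N_B * (1 - x) + 1)) ^ n := by
  have hx0 : 0 ≤ x := le_trans (by positivity) hx1.le
  have hG : 0 < η * N_B * (1 - x) + 1 := by
    have : 0 ≤ 1 - x := sub_nonneg.2 hx2
    positivity
  exact stmt7_general hM hNB.le hG hε1 hx1 hq0
    (summable_mul_pow_of_abs_le_one hq1.summable (abs_le.2 ⟨by linarith, hx2⟩))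
    (P_S := fun ξ ↦ ∑' n, p n * ξ ^ n) hrel hcov
end

section
/- Let M be a positive integer, p : (Fin M → ℕ) → ℝ nonnegative with ∑_𝐧 p_𝐧 < ∞, and ξ : Fin M → ℝ with 0 ≤ ξ_m < 1 for all m. Then ∑_{𝐫 ∈ ℕ^M} (∑_{𝐧 ∈ ℕ^M} p_𝐧 ∏_{m=1}^{M} C(n_m + r_m, r_m)) · ∏_{m=1}^{M} ξ_m^{r_m} = (∏_{m=1}^{M} 1/(1-ξ_m)) · ∑_{𝐧 ∈ ℕ^M} p_𝐧 ∏_{m=1}^{M} (1/(1-ξ_m))^{n_m}, where both sides may simultaneously be infinite and C(·,·) denotes the binomial coefficient. -/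
open scoped BigOperators ENNReal

/- Expanding each `(1 - x m)⁻¹ ^ (v m + 1)` as the negative binomial series
`∑ r, C(v m + r, r) x m ^ r` turns the right-hand side into a double sum over `r` and `v`. Every
term is nonnegative, so in `ℝ≥0∞` products of series and interchanges of summation need no
convergence condition. -/

section

open Finset.HasAntidiagonal (antidiagonal)

-- `Summable.tsum_mul_tsum_eq_tsum_sum_antidiagonal` does not apply: `*` is discontinuous on `ℝ≥0∞`.
theorem ennreal_tsum_mul_tsum_eq_tsum_sum_antidiagonal {A : Type*} [AddCommMonoid A]
    [Finset.HasAntidiagonal A] (f g : A → ℝ≥0∞) :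
    (∑' a, f a) * ∑' b, g b = ∑' c, ∑ ab ∈ antidiagonal c, f ab.1 * g ab.2 := by
  calc (∑' a, f a) * ∑' b, g b
      = ∑' ab : A × A, f ab.1 * g ab.2 := by
        simp_rw [ENNReal.tsum_prod', ENNReal.tsum_mul_left, ENNReal.tsum_mul_right]
    _ = ∑' c, ∑' ab : antidiagonal c, f ab.1.1 * g ab.1.2 := by
        rw [← Finset.HasAntidiagonal.sigmaAntidiagonalEquivProd.tsum_eq, ENNReal.tsum_sigma']
        rfl
    _ = ∑' c, ∑ ab ∈ antidiagonal c, f ab.1 * g ab.2 :=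
        tsum_congr fun c => Finset.tsum_subtype _ fun ab : A × A => f ab.1 * g ab.2

theorem ennreal_tsum_choose_mul_pow (n : ℕ) (x : ℝ≥0∞) :
    ∑' r : ℕ, ((n + r).choose r : ℝ≥0∞) * x ^ r = (1 - x)⁻¹ ^ (n + 1) := by
  induction n with
  | zero => simp
  | succ n ih =>
    have hockey_stick (r : ℕ) : (n + 1 + r).choose r =
        ∑ ij ∈ antidiagonal r, (n + ij.2).choose ij.2 := by
      rw [← Nat.choose_symm_add, add_right_comm, ← Finset.sum_antidiagonal_choose_add]
      exact Finset.sum_congr rfl fun _ _ => Nat.choose_symm_add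
    rw [pow_succ', ← ih, ← ENNReal.tsum_geometric, ennreal_tsum_mul_tsum_eq_tsum_sum_antidiagonal]
    refine tsum_congr fun r => ?_
    rw [hockey_stick, Nat.cast_sum, Finset.sum_mul]
    refine Finset.sum_congr rfl fun ij hij => ?_
    rw [← Finset.HasAntidiagonal.mem_antidiagonal.mp hij, pow_add, mul_left_comm]

end

theorem ennreal_tsum_pi_prod {ι : Type*} [Fintype ι] {κ : ι → Type*} (f : ∀ i, κ i → ℝ≥0∞) :
    ∑' k : ∀ i, κ i, ∏ i, f i (k i) = ∏ i, ∑' j, f i j := by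
  refine Fintype.induction_empty_option
    (P := fun ι _ => ∀ (κ : ι → Type _) (f : ∀ i, κ i → ℝ≥0∞),
      ∑' k : ∀ i, κ i, ∏ i, f i (k i) = ∏ i, ∑' j, f i j)
    (fun α β _ e ih κ f => ?of_equiv) (fun κ f => ?empty) (fun α _ ih κ f => ?option) ι κ f
  case of_equiv =>
    let := Fintype.ofEquiv β e.symm
    rw [← (Equiv.piCongrLeft κ e).tsum_eq, ← e.prod_comp, ← ih]
    refine tsum_congr fun k => ?_
    simp only [← e.prod_comp, Equiv.piCongrLeft_apply_apply]
  case empty => simp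
  case option =>
    rw [← Equiv.piOptionEquivProd.symm.tsum_eq, ENNReal.tsum_prod', Fintype.prod_option, ← ih,
      ← ENNReal.tsum_mul_right]
    refine tsum_congr fun j => ?_
    rw [← ENNReal.tsum_mul_left]
    exact tsum_congr fun k => Fintype.prod_option _

theorem ennreal_tsum_prod_choose_mul_pow {ι : Type*} [Fintype ι] (v : ι → ℕ) (x : ι → ℝ≥0∞) :
    ∑' r : ι → ℕ, (∏ m, ((v m + r m).choose (r m) : ℝ≥0∞)) * ∏ m, x m ^ r m =
      ∏ m, (1 - x m)⁻¹ ^ (v m + 1) := by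
  simp_rw [← Finset.prod_mul_distrib, ← ennreal_tsum_choose_mul_pow]
  exact ennreal_tsum_pi_prod fun m k => ((v m + k).choose k : ℝ≥0∞) * x m ^ k

theorem ennreal_ofReal_one_div_one_sub {x : ℝ} (hx0 : 0 ≤ x) (hx1 : x < 1) :
    ENNReal.ofReal (1 / (1 - x)) = (1 - ENNReal.ofReal x)⁻¹ := by
  rw [one_div, ENNReal.ofReal_inv_of_pos (sub_pos.mpr hx1), ENNReal.ofReal_sub 1 hx0,
    ENNReal.ofReal_one]

-- For a photon-number distribution `p`, the sum over `v` is `R_r / ∏ m, (r m)!`, with `R_r` the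
-- `r`-th rising factorial moment.
-- If `1 ≤ x m`, then `(1 - x m)⁻¹ = ∞`, which is the sum of the divergent series `∑ k, x m ^ k`.
theorem stmt14_general {ι : Type*} [Fintype ι] (p : (ι → ℕ) → ℝ≥0∞) (x : ι → ℝ≥0∞) :
    ∑' r : ι → ℕ,
        (∑' v : ι → ℕ, p v * ∏ m, ((v m + r m).choose (r m) : ℝ≥0∞)) * ∏ m, x m ^ r m
      = (∏ m, (1 - x m)⁻¹) * ∑' v : ι → ℕ, p v * ∏ m, (1 - x m)⁻¹ ^ v m := by
  calc ∑' r : ι → ℕ,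
        (∑' v : ι → ℕ, p v * ∏ m, ((v m + r m).choose (r m) : ℝ≥0∞)) * ∏ m, x m ^ r m
      = ∑' v : ι → ℕ, p v *
          ∑' r : ι → ℕ, (∏ m, ((v m + r m).choose (r m) : ℝ≥0∞)) * ∏ m, x m ^ r m := by
        simp_rw [← ENNReal.tsum_mul_right, ← ENNReal.tsum_mul_left, ← mul_assoc]
        exact ENNReal.tsum_comm
    _ = ∑' v : ι → ℕ, p v * ∏ m, (1 - x m)⁻¹ ^ (v m + 1) := by
        simp_rw [ennreal_tsum_prod_choose_mul_pow]
    _ = (∏ m, (1 - x m)⁻¹) * ∑' v : ι → ℕ, p v * ∏ m, (1 - x m)⁻¹ ^ v m := by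
        simp_rw [pow_succ', Finset.prod_mul_distrib, mul_left_comm (p _), ENNReal.tsum_mul_left]

/-- Multimode relation (Eq. (84) of the paper) between the rising-factorial
moment generating function and the probability generating function:
`𝓡(ξ) = ∏ (1-ξ_m)⁻¹ · 𝓟(1/(1-ξ₁), …, 1/(1-ξ_M))`. Sums are taken in `ℝ≥0∞`
since both sides may simultaneously be infinite. -/
theorem stmt14 (M : ℕ) (hM : 0 < M) (p : (Fin M → ℕ) → ℝ)
    (hp0 : ∀ v, 0 ≤ p v) (hp : Summable p)
    (ξ : Fin M → ℝ) (hξ0 : ∀ m, 0 ≤ ξ m) (hξ1 : ∀ m, ξ m < 1) :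
    ∑' r : Fin M → ℕ,
        (∑' v : Fin M → ℕ,
            ENNReal.ofReal (p v) * ∏ m, ((v m + r m).choose (r m) : ℝ≥0∞)) *
          ∏ m, ENNReal.ofReal (ξ m) ^ (r m)
      = (∏ m, ENNReal.ofReal (1 / (1 - ξ m))) *
          ∑' v : Fin M → ℕ,
            ENNReal.ofReal (p v) * ∏ m, ENNReal.ofReal (1 / (1 - ξ m)) ^ (v m) := by
  simp_rw [fun m => ennreal_ofReal_one_div_one_sub (hξ0 m) (hξ1 m)]
  exact stmt14_general (fun v => ENNReal.ofReal (p v)) fun m => ENNReal.ofReal (ξ m)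
end
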